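/- Let G = (V,E) be a finite connected undirected graph and suppose b* is an LR_OL-feasible function whose objective value Σ_{(i,j)∈E} b*(i,j) equals the infimum of the objective over all LR_OL-feasible functions. Then the shortest-path closure d' of b* is an LR-feasible function whose objective value equals the infimum of the objective over all LR-feasible functions; that is, d' is an optimal solution of (LR). -/

import Mathlib

/-!
The closure `d'` is squeezed between `b` and `b`-weights of walks. By induction along a walk, the
one-leg triangle inequality gives `b i j ≤ weight p` for every walk `p` from `i` to `j`
(`le_walkWeight`), so `b ≤ d'` and `d'` inherits the normalization. Reversing and concatenating
walks make `d'` symmetric and give it the full triangle inequality, so `d'` is (LR)-feasible.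
A single edge is a walk, so `d' ≤ b` on edges and the objective of `d'` is at most that of `b`,
the (LR_OL) optimum. Every (LR)-feasible function is (LR_OL)-feasible, so this optimum is a
lower bound for the (LR) objective, and `d'` attains it.
-/

open SimpleGraph

/-- The `b`-weight of a walk: the sum of `b u v` over consecutive vertices `(u, v)`. -/
def walkWeight {V : Type*} {G : SimpleGraph V} (b : V → V → ℝ) {i j : V}
    (p : G.Walk i j) : ℝ :=
  (p.darts.map fun d => b d.toProd.1 d.toProd.2).sum

/-- `b` is one-leg feasible on `G`: nonnegative, symmetric, zero on the diagonal, and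
satisfying the triangle inequality for all distinct `i j k` with `(i,k)` an edge. -/
def OneLegFeasible {V : Type*} (G : SimpleGraph V) (b : V → V → ℝ) : Prop :=
  (∀ i j, 0 ≤ b i j) ∧ (∀ i j, b i j = b j i) ∧ (∀ i, b i i = 0) ∧
    ∀ i j k, i ≠ j → j ≠ k → i ≠ k → G.Adj i k → b i j ≤ b i k + b k j

open scoped Classical in
/-- The shortest-path closure of `b` on `G`: the infimum of the `b`-weights of walks
from `i` to `j`, with value `0` on the diagonal. -/
noncomputable def spClosure {V : Type*} (G : SimpleGraph V) (b : V → V → ℝ)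
    (i j : V) : ℝ :=
  if i = j then 0 else sInf {x | ∃ p : G.Walk i j, walkWeight b p = x}

/-- `d` is feasible for the full metric linear program (LR) on `G`: nonnegative,
symmetric, zero on the diagonal, the triangle inequality for all distinct triples,
and the normalization `∑ i, ∑ j, d i j ≥ 1`. -/
def LRFeasible {V : Type*} [Fintype V] (G : SimpleGraph V) (d : V → V → ℝ) : Prop :=
  (∀ i j, 0 ≤ d i j) ∧ (∀ i j, d i j = d j i) ∧ (∀ i, d i i = 0) ∧
    (∀ i j k, i ≠ j → j ≠ k → i ≠ k → d i j ≤ d i k + d k j) ∧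
    1 ≤ ∑ i, ∑ j, d i j

/-- `b` is feasible for the one-leg linear program (LR_OL) on `G`: as `LRFeasible`,
but the triangle inequality is required only for distinct triples `i j k`
with `(i,k)` an edge of `G`. -/
def LROLFeasible {V : Type*} [Fintype V] (G : SimpleGraph V) (b : V → V → ℝ) : Prop :=
  (∀ i j, 0 ≤ b i j) ∧ (∀ i j, b i j = b j i) ∧ (∀ i, b i i = 0) ∧
    (∀ i j k, i ≠ j → j ≠ k → i ≠ k → G.Adj i k → b i j ≤ b i k + b k j) ∧
    1 ≤ ∑ i, ∑ j, b i j

open scoped Classical in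
/-- The objective `∑_{(i,j) ∈ E} x i j`, with each undirected edge counted once
(equivalently, half the sum over all ordered adjacent pairs for symmetric `x`). -/
noncomputable def edgeObjective {V : Type*} [Fintype V] (G : SimpleGraph V)
    (x : V → V → ℝ) : ℝ :=
  (∑ i, ∑ j, if G.Adj i j then x i j else 0) / 2

section Closure

variable {V : Type*} {G : SimpleGraph V} {b : V → V → ℝ}

lemma walkWeight_nil (i : V) : walkWeight b (Walk.nil : G.Walk i i) = 0 := by
  simp [walkWeight]

lemma walkWeight_cons {i k j : V} (h : G.Adj i k) (p : G.Walk k j) :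
    walkWeight b (Walk.cons h p) = b i k + walkWeight b p := by
  simp [walkWeight]

lemma walkWeight_append {i k j : V} (p : G.Walk i k) (q : G.Walk k j) :
    walkWeight b (p.append q) = walkWeight b p + walkWeight b q := by
  simp [walkWeight]

lemma walkWeight_reverse (hsymm : ∀ i j, b i j = b j i) {i j : V} (p : G.Walk i j) :
    walkWeight b p.reverse = walkWeight b p := by
  induction p with
  | nil => simp [walkWeight]
  | cons h p ih =>
    rw [Walk.reverse_cons, walkWeight_append, ih, walkWeight_cons, walkWeight_cons,
      walkWeight_nil, hsymm]
    ring

lemma walkWeight_nonneg (hnn : ∀ i j, 0 ≤ b i j) {i j : V} (p : G.Walk i j) :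
    0 ≤ walkWeight b p := by
  refine List.sum_nonneg fun x hx => ?_
  obtain ⟨d, -, rfl⟩ := List.mem_map.1 hx
  exact hnn _ _

/-- Peeling off the first edge of a walk only uses triangle inequalities whose first leg is an
edge, so one-leg feasibility already bounds `b` by the weight of any walk. -/
lemma le_walkWeight (hb : OneLegFeasible G b) {i j : V} (p : G.Walk i j) :
    b i j ≤ walkWeight b p := by
  obtain ⟨hnn, -, hdiag, htri⟩ := hb
  induction p with
  | nil => rw [hdiag, walkWeight_nil]
  | @cons i k j h p ih =>
    by_cases hij : i = j
    · subst hij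
      rw [hdiag]
      exact walkWeight_nonneg hnn _
    rw [walkWeight_cons]
    by_cases hjk : j = k
    · subst hjk
      linarith [walkWeight_nonneg hnn p]
    · linarith [htri i j k hij hjk h.ne h]

lemma spClosure_le_walkWeight (hnn : ∀ i j, 0 ≤ b i j) {i j : V} (p : G.Walk i j) :
    spClosure G b i j ≤ walkWeight b p := by
  unfold spClosure
  split_ifs
  · exact walkWeight_nonneg hnn p
  · refine csInf_le ⟨0, ?_⟩ ⟨p, rfl⟩
    rintro _ ⟨q, rfl⟩
    exact walkWeight_nonneg hnn q

lemma le_spClosure (hconn : G.Connected) {i j : V} (hij : i ≠ j) {c : ℝ}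
    (hc : ∀ p : G.Walk i j, c ≤ walkWeight b p) : c ≤ spClosure G b i j := by
  rw [spClosure, if_neg hij]
  obtain ⟨p⟩ := hconn.preconnected i j
  refine le_csInf ⟨_, p, rfl⟩ ?_
  rintro _ ⟨q, rfl⟩
  exact hc q

lemma spClosure_self (i : V) : spClosure G b i i = 0 := by
  simp [spClosure]

lemma self_le_spClosure (hconn : G.Connected) (hb : OneLegFeasible G b) (i j : V) :
    b i j ≤ spClosure G b i j := by
  by_cases hij : i = j
  · subst hij
    rw [spClosure_self, hb.2.2.1]
  · exact le_spClosure hconn hij (le_walkWeight hb)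

lemma spClosure_comm_le (hconn : G.Connected) (hb : OneLegFeasible G b) (i j : V) :
    spClosure G b i j ≤ spClosure G b j i := by
  by_cases hij : i = j
  · rw [hij]
  · refine le_spClosure hconn (Ne.symm hij) fun p => ?_
    rw [← walkWeight_reverse hb.2.1]
    exact spClosure_le_walkWeight hb.1 _

lemma spClosure_triangle (hconn : G.Connected) (hnn : ∀ i j, 0 ≤ b i j) {i j k : V}
    (hik : i ≠ k) (hkj : k ≠ j) :
    spClosure G b i j ≤ spClosure G b i k + spClosure G b k j := by
  rw [← sub_le_iff_le_add]
  refine le_spClosure hconn hik fun p => ?_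
  rw [sub_le_iff_le_add, ← sub_le_iff_le_add']
  refine le_spClosure hconn hkj fun q => ?_
  rw [sub_le_iff_le_add', ← walkWeight_append]
  exact spClosure_le_walkWeight hnn _

lemma spClosure_le_of_adj (hnn : ∀ i j, 0 ≤ b i j) {i j : V} (h : G.Adj i j) :
    spClosure G b i j ≤ b i j := by
  simpa [walkWeight_cons, walkWeight_nil] using
    spClosure_le_walkWeight hnn (Walk.cons h Walk.nil)

lemma edgeObjective_mono [Fintype V] {x y : V → V → ℝ}
    (h : ∀ i j, G.Adj i j → x i j ≤ y i j) : edgeObjective G x ≤ edgeObjective G y := by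
  unfold edgeObjective
  refine div_le_div_of_nonneg_right ?_ zero_le_two
  refine Finset.sum_le_sum fun i _ => Finset.sum_le_sum fun j _ => ?_
  split_ifs with hij
  · exact h i j hij
  · exact le_rfl

lemma edgeObjective_nonneg [Fintype V] {x : V → V → ℝ} (h : ∀ i j, 0 ≤ x i j) :
    0 ≤ edgeObjective G x := by
  have := edgeObjective_mono (G := G) (x := fun _ _ => 0) fun i j _ => h i j
  simpa [edgeObjective] using this

lemma LRFeasible.lrolFeasible [Fintype V] {x : V → V → ℝ} (h : LRFeasible G x) :
    LROLFeasible G x :=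
  ⟨h.1, h.2.1, h.2.2.1, fun i j k hij hjk hik _ => h.2.2.2.1 i j k hij hjk hik, h.2.2.2.2⟩

lemma spClosure_lrFeasible [Fintype V] (hconn : G.Connected) (hb : LROLFeasible G b) :
    LRFeasible G (spClosure G b) := by
  obtain ⟨hnn, hsymm, hdiag, htri, hsum⟩ := hb
  have hol : OneLegFeasible G b := ⟨hnn, hsymm, hdiag, htri⟩
  refine ⟨fun i j => (hnn i j).trans (self_le_spClosure hconn hol i j),
    fun i j => le_antisymm (spClosure_comm_le hconn hol i j) (spClosure_comm_le hconn hol j i),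
    spClosure_self,
    fun i j k _ hjk hik => spClosure_triangle hconn hnn hik hjk.symm,
    hsum.trans ?_⟩
  exact Finset.sum_le_sum fun i _ => Finset.sum_le_sum fun j _ => self_le_spClosure hconn hol i j

end Closure

/-- **Optimality transfer.** If `b` is an (LR_OL)-feasible function on a finite
connected graph whose objective value attains the (LR_OL) optimum, then its
shortest-path closure `d'` is (LR)-feasible and its objective value attains the
(LR) optimum; that is, `d'` is an optimal solution of (LR). -/
theorem spClosure_optimal {V : Type*} [Fintype V] (G : SimpleGraph V)
    (hconn : G.Connected) (b : V → V → ℝ) (hb : LROLFeasible G b)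
    (hopt : edgeObjective G b =
      sInf {y : ℝ | ∃ x : V → V → ℝ, LROLFeasible G x ∧ edgeObjective G x = y}) :
    LRFeasible G (spClosure G b) ∧
    edgeObjective G (spClosure G b) =
      sInf {y : ℝ | ∃ x : V → V → ℝ, LRFeasible G x ∧ edgeObjective G x = y} := by
  have hfeas := spClosure_lrFeasible hconn hb
  refine ⟨hfeas, le_antisymm (le_csInf ⟨_, _, hfeas, rfl⟩ ?_) (csInf_le ⟨0, ?_⟩ ⟨_, hfeas, rfl⟩)⟩
  · rintro _ ⟨x, hx, rfl⟩
    calc edgeObjective G (spClosure G b)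
        ≤ edgeObjective G b := edgeObjective_mono fun i j h => spClosure_le_of_adj hb.1 h
      _ ≤ edgeObjective G x := by
        rw [hopt]
        refine csInf_le ⟨0, ?_⟩ ⟨x, hx.lrolFeasible, rfl⟩
        rintro _ ⟨z, hz, rfl⟩
        exact edgeObjective_nonneg hz.1
  · rintro _ ⟨x, hx, rfl⟩
    exact edgeObjective_nonneg hx.1
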